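/- Let n ≥ 1, s ∈ (0,1), and β ∈ (0, 2s). For x ∈ ℝⁿ \ {0} define J(x) := ∫_{ℝⁿ} (|x+z|^β + |x−z|^β − 2|x|^β) |z|^{−n−2s} dz. Then for every x ≠ 0 the integrand is Lebesgue integrable on ℝⁿ, and there exists a constant C ∈ ℝ (depending only on n, s, β) such that J(x) = C |x|^{β−2s} for all x ≠ 0. In particular J is homogeneous of degree β − 2s and rotation invariant. -/

import Mathlib

open MeasureTheory

noncomputable section

/-!
Write `u = ‖·‖ ^ β`. Near `z = 0` the second difference of `u` at `x ≠ 0` is `O(‖z‖ ^ 2)`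
because `u` is smooth at `x`, and at infinity it is `O(‖z‖ ^ max β 0)`. Against the kernel
`‖z‖ ^ (-n - 2 * s)` the first bound is integrable at the origin because `s < 1`, the second one
at infinity because `max β 0 < 2 * s`. The singularities at `z = ±x` are integrable because
`-n < β`.

The substitutions `z ↦ ρ • z` and `z ↦ R z`, for a linear isometry `R`, show that the integral
is homogeneous of degree `β - 2 * s` and rotation invariant in `x`. Such a function is
determined by its value at a unit vector, since a reflection carries any vector to any other one
of the same norm.
-/

open Asymptotics Bornology Filter Module Topology

section SecondDifference

/-- The symmetric second difference of `u` at `x` with increment `z`. -/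
def secondDifference {E F : Type*} [AddCommGroup E] [AddCommGroup F] (u : E → F) (x z : E) : F :=
  u (x + z) + u (x - z) - 2 • u x

variable {E F : Type*} [NormedAddCommGroup E] [NormedAddCommGroup F]

theorem isBigO_secondDifference_nhds_zero [NormedSpace ℝ E] [NormedSpace ℝ F] {u : E → F} {x : E}
    (hu : ContDiffAt ℝ 2 u x) : secondDifference u x =O[𝓝 0] fun z ↦ ‖z‖ ^ 2 := by
  have hadd : Tendsto (fun z : E ↦ x + z) (𝓝 0) (𝓝 x) := by
    simpa using (continuous_const_add x).tendsto 0
  have hsub : Tendsto (fun z : E ↦ x - z) (𝓝 0) (𝓝 x) := by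
    simpa using (continuous_sub_left x).tendsto 0
  have hasFDerivAt_near : ∀ᶠ z in 𝓝 0, HasFDerivAt (secondDifference u x)
      (fderiv ℝ u (x + z) - fderiv ℝ u (x - z)) z := by
    have hdiff : ∀ᶠ y in 𝓝 x, DifferentiableAt ℝ u y :=
      (hu.eventually (by simp)).mono fun y hy ↦ hy.differentiableAt (by simp)
    filter_upwards [hadd.eventually hdiff, hsub.eventually hdiff] with z hz_add hz_sub
    have h_add := hz_add.hasFDerivAt.comp z ((hasFDerivAt_id z).const_add x)
    have h_sub := hz_sub.hasFDerivAt.comp z ((hasFDerivAt_id z).const_sub x)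
    refine ((h_add.add h_sub).sub_const (2 • u x)).congr_fderiv ?_
    simp [sub_eq_add_neg]
  have fderiv_isBigO : fderiv ℝ (secondDifference u x) =O[𝓝 0] fun z ↦ ‖z‖ := by
    have hlip : (fun y ↦ fderiv ℝ u y - fderiv ℝ u x) =O[𝓝 x] fun y ↦ y - x :=
      ((hu.fderiv_right (m := 1) (by norm_num)).differentiableAt one_ne_zero).isBigO_sub
    have hlip_add : (fun z ↦ fderiv ℝ u (x + z) - fderiv ℝ u x) =O[𝓝 0] fun z ↦ ‖z‖ :=
      (hlip.comp_tendsto hadd).norm_right.congr_right (by simp)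
    have hlip_sub : (fun z ↦ fderiv ℝ u (x - z) - fderiv ℝ u x) =O[𝓝 0] fun z ↦ ‖z‖ :=
      (hlip.comp_tendsto hsub).norm_right.congr_right (by simp)
    refine (hlip_add.sub hlip_sub).congr' ?_ .rfl
    filter_upwards [hasFDerivAt_near] with z hz
    rw [hz.fderiv, sub_sub_sub_cancel_right]
  have hzero : secondDifference u x 0 = 0 := by simp [secondDifference, two_nsmul]
  simpa [one_add_one_eq_two] using isBigO_norm_rpow_add_one_of_fderiv_of_apply_eq_zero zero_le_one
    (hasFDerivAt_near.mono fun z hz ↦ hz.differentiableAt) (by simpa using fderiv_isBigO) hzero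

theorem isBigO_norm_rpow_norm_rpow_cobounded {a b : ℝ} (hab : a ≤ b) :
    (fun z : E ↦ ‖z‖ ^ a) =O[cobounded E] fun z ↦ ‖z‖ ^ b := by
  refine .of_bound' ?_
  filter_upwards [eventually_cobounded_le_norm 1] with z hz
  rw [Real.norm_of_nonneg (by positivity), Real.norm_of_nonneg (by positivity)]
  exact Real.rpow_le_rpow_of_exponent_le hz hab

theorem isBigO_secondDifference_cobounded {u : E → F} {γ : ℝ} (hγ : 0 ≤ γ)
    (hu : u =O[cobounded E] fun z ↦ ‖z‖ ^ γ) (x : E) :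
    secondDifference u x =O[cobounded E] fun z ↦ ‖z‖ ^ γ := by
  have comp_isBigO {g : E → E} (hg : Tendsto g (cobounded E) (cobounded E))
      (hg_id : g =O[cobounded E] id) : (fun z ↦ u (g z)) =O[cobounded E] fun z ↦ ‖z‖ ^ γ :=
    (hu.comp_tendsto hg).trans (hg_id.norm_norm.rpow hγ (.of_forall fun z ↦ norm_nonneg z))
  have const_isBigO : (fun _ ↦ 2 • u x) =O[cobounded E] fun z ↦ ‖z‖ ^ γ :=
    (isBigO_const_const (2 • u x) one_ne_zero _).trans <| by
      simpa using isBigO_norm_rpow_norm_rpow_cobounded (E := E) hγ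
  have hx : (fun _ ↦ x) =O[cobounded E] id := (isLittleO_const_id_cobounded x).isBigO
  have hid : (fun z : E ↦ z) =O[cobounded E] id := isBigO_refl _ _
  exact ((comp_isBigO (tendsto_const_add_cobounded x) (hx.add hid)).add
    (comp_isBigO (tendsto_const_sub_cobounded x) (hx.sub hid))).sub const_isBigO

end SecondDifference

section RadialPowers

variable {E : Type*} [NormedAddCommGroup E] [NormedSpace ℝ E] [FiniteDimensional ℝ E]
  [MeasurableSpace E] [BorelSpace E] {μ : Measure E} [μ.IsAddHaarMeasure]

theorem locallyIntegrable_norm_rpow [Nontrivial E] {p : ℝ} (hp : -(finrank ℝ E : ℝ) < p) :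
    LocallyIntegrable (fun z : E ↦ ‖z‖ ^ p) μ :=
  locallyIntegrable_of_norm_le_rpow (C := 1) (α := -p) finrank_pos (by linarith)
    (.of_forall fun z ↦ by simp [abs_of_nonneg (Real.rpow_nonneg (norm_nonneg z) p)])
    (by fun_prop : Measurable fun z : E ↦ ‖z‖ ^ p).aestronglyMeasurable

theorem integrableAtFilter_norm_rpow_cobounded {p : ℝ} (hp : p < -(finrank ℝ E : ℝ)) :
    IntegrableAtFilter (fun z : E ↦ ‖z‖ ^ p) (cobounded E) μ := by
  have hint : Integrable (fun z : E ↦ (1 + ‖z‖) ^ p) μ := by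
    simpa using integrable_one_add_norm (μ := μ) (r := -p) (by linarith)
  have norm_isTheta : (fun z : E ↦ ‖z‖) =Θ[cobounded E] fun z ↦ 1 + ‖z‖ :=
    (isLittleO_const_id_cobounded (1 : ℝ)).norm_right.right_isTheta_add
  have hmeas : Measurable fun z : E ↦ ‖z‖ ^ p := by fun_prop
  rw [Metric.cobounded_eq_cocompact] at norm_isTheta ⊢
  exact (norm_isTheta.rpow (.of_forall fun z ↦ norm_nonneg z)
    (.of_forall fun z ↦ by positivity)).isBigO.integrableAtFilter
      hmeas.aestronglyMeasurable.stronglyMeasurableAtFilter (hint.integrableAtFilter _)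

theorem integrable_mul_norm_rpow [Nontrivial E] {f : E → ℝ} {a b p : ℝ}
    (hf : LocallyIntegrable f μ) (hf_zero : f =O[𝓝 0] fun z ↦ ‖z‖ ^ a)
    (hf_infty : f =O[cobounded E] fun z ↦ ‖z‖ ^ b)
    (ha : -(finrank ℝ E : ℝ) < a + p) (hb : b + p < -(finrank ℝ E : ℝ)) :
    Integrable (fun z ↦ f z * ‖z‖ ^ p) μ := by
  have isBigO_mul {l : Filter E} {c : ℝ} (h : f =O[l] fun z ↦ ‖z‖ ^ c) :
      (fun z ↦ f z * ‖z‖ ^ p) =O[l] fun z ↦ ‖z‖ ^ (c + p) := by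
    refine (h.mul (isBigO_refl _ l)).trans (.of_norm_le fun z ↦ ?_)
    rw [Real.norm_of_nonneg (by positivity)]
    exact Real.le_rpow_add (norm_nonneg z) c p
  have hloc : LocallyIntegrable (fun z ↦ f z * ‖z‖ ^ p) μ := by
    intro y
    obtain rfl | hy := eq_or_ne y 0
    · have hmeas : Measurable fun z : E ↦ ‖z‖ ^ p := by fun_prop
      exact (isBigO_mul hf_zero).integrableAtFilter
        (hf.aestronglyMeasurable.mul hmeas.aestronglyMeasurable).stronglyMeasurableAtFilter
        (locallyIntegrable_norm_rpow ha 0)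
    · have hcont : ContinuousOn (fun z : E ↦ ‖z‖ ^ p) {0}ᶜ :=
        continuous_norm.continuousOn.rpow_const fun z hz ↦ .inl (norm_ne_zero_iff.2 hz)
      have := (hf.locallyIntegrableOn {0}ᶜ).mul_continuousOn hcont
        isOpen_compl_singleton.isLocallyClosed y hy
      rwa [isOpen_compl_singleton.nhdsWithin_eq hy] at this
  have hint_infty := integrableAtFilter_norm_rpow_cobounded (μ := μ) hb
  rw [Metric.cobounded_eq_cocompact] at hf_infty hint_infty
  exact hloc.integrable_of_isBigO_cocompact (isBigO_mul hf_infty) hint_infty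

theorem locallyIntegrable_secondDifference {F : Type*} [NormedAddCommGroup F] {u : E → F}
    (hu : LocallyIntegrable u μ) (x : E) : LocallyIntegrable (secondDifference u x) μ := by
  have hadd : LocallyIntegrable (fun z ↦ u (x + z)) μ :=
    (locallyIntegrable_map_homeomorph (Homeomorph.addLeft x)).1 <| by
      rwa [Homeomorph.coe_addLeft, map_add_left_eq_self]
  have hsub : LocallyIntegrable (fun z ↦ u (x - z)) μ :=
    (locallyIntegrable_map_homeomorph (Homeomorph.subLeft x)).1 <| by
      rwa [Homeomorph.coe_subLeft, Measure.map_sub_left_eq_self]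
  exact (hadd.add hsub).sub (locallyIntegrable_const (2 • u x))

end RadialPowers

section FracLaplacian

variable {E : Type*} [NormedAddCommGroup E] [InnerProductSpace ℝ E] [FiniteDimensional ℝ E]
  [MeasurableSpace E] [BorelSpace E] {s β : ℝ} {u : E → ℝ} {x : E}

/-- The integrand of the second-difference form of the fractional Laplacian of order `2 * s`. -/
def fracLaplacianIntegrand (s : ℝ) (u : E → ℝ) (x z : E) : ℝ :=
  secondDifference u x z * ‖z‖ ^ (-(finrank ℝ E : ℝ) - 2 * s)

/-- The fractional Laplacian of order `2 * s` in second-difference form, without its normalizing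
constant. It has the value `0` where the integral does not converge absolutely. -/
def fracLaplacian (s : ℝ) (u : E → ℝ) (x : E) : ℝ :=
  ∫ z, fracLaplacianIntegrand s u x z

theorem integrable_fracLaplacianIntegrand [Nontrivial E] {γ : ℝ} (hs : s < 1) (hγ : 0 ≤ γ)
    (hγs : γ < 2 * s) (hu : LocallyIntegrable u) (hux : ContDiffAt ℝ 2 u x)
    (hu_infty : u =O[cobounded E] fun z ↦ ‖z‖ ^ γ) :
    Integrable (fracLaplacianIntegrand s u x) :=
  integrable_mul_norm_rpow (a := 2) (locallyIntegrable_secondDifference hu x)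
    (by simpa using isBigO_secondDifference_nhds_zero hux)
    (isBigO_secondDifference_cobounded hγ hu_infty x) (by linarith) (by linarith)

theorem fracLaplacian_const_mul (s c : ℝ) (u : E → ℝ) (x : E) :
    fracLaplacian s (fun y ↦ c * u y) x = c * fracLaplacian s u x := by
  simp only [fracLaplacian, ← integral_const_mul]
  congr with z
  simp only [fracLaplacianIntegrand, secondDifference, nsmul_eq_mul]
  ring

theorem fracLaplacian_comp_linearIsometryEquiv (s : ℝ) (u : E → ℝ) (R : E ≃ₗᵢ[ℝ] E) (x : E) :
    fracLaplacian s (fun y ↦ u (R y)) x = fracLaplacian s u (R x) := by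
  rw [fracLaplacian, fracLaplacian, ← R.measurePreserving.integral_comp
    R.toHomeomorph.measurableEmbedding (fracLaplacianIntegrand s u (R x))]
  simp [fracLaplacianIntegrand, secondDifference]

theorem fracLaplacian_comp_smul (s : ℝ) (u : E → ℝ) {ρ : ℝ} (hρ : 0 < ρ) (x : E) :
    fracLaplacian s (fun y ↦ u (ρ • y)) x = ρ ^ (2 * s) * fracLaplacian s u (ρ • x) := by
  have integrand_eq (z : E) : fracLaplacianIntegrand s (fun y ↦ u (ρ • y)) x z =
      ρ ^ (finrank ℝ E + 2 * s) * fracLaplacianIntegrand s u (ρ • x) (ρ • z) := by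
    have hρ_cancel : ρ ^ (finrank ℝ E + 2 * s) * ρ ^ (-(finrank ℝ E : ℝ) - 2 * s) = 1 := by
      rw [← Real.rpow_add hρ]; simp
    simp only [fracLaplacianIntegrand, secondDifference, smul_add, smul_sub, norm_smul,
      Real.norm_of_nonneg hρ.le, Real.mul_rpow hρ.le (norm_nonneg z)]
    linear_combination (-(u (ρ • x + ρ • z) + u (ρ • x - ρ • z) - 2 • u (ρ • x)) *
      ‖z‖ ^ (-(finrank ℝ E : ℝ) - 2 * s)) * hρ_cancel
  calc
    fracLaplacian s (fun y ↦ u (ρ • y)) x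
    _ = ρ ^ (finrank ℝ E + 2 * s) * ∫ z, fracLaplacianIntegrand s u (ρ • x) (ρ • z) := by
      simp_rw [fracLaplacian, integrand_eq, integral_const_mul]
    _ = ρ ^ (finrank ℝ E + 2 * s) * ((ρ ^ finrank ℝ E)⁻¹ * fracLaplacian s u (ρ • x)) := by
      rw [Measure.integral_comp_smul_of_nonneg _ _ _ (hR := hρ.le), smul_eq_mul, fracLaplacian]
    _ = ρ ^ (2 * s) * fracLaplacian s u (ρ • x) := by
      rw [Real.rpow_add hρ, Real.rpow_natCast]
      field_simp

theorem fracLaplacian_smul_of_homogeneous {ρ : ℝ} (hρ : 0 < ρ)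
    (hu : ∀ y, u (ρ • y) = ρ ^ β * u y) (s : ℝ) (x : E) :
    fracLaplacian s u (ρ • x) = ρ ^ (β - 2 * s) * fracLaplacian s u x := by
  have hscale : ρ ^ β * fracLaplacian s u x = ρ ^ (2 * s) * fracLaplacian s u (ρ • x) := by
    rw [← fracLaplacian_comp_smul s u hρ, ← fracLaplacian_const_mul, funext hu]
  rw [Real.rpow_sub hρ, div_mul_eq_mul_div, hscale, mul_div_cancel_left₀ _ (by positivity)]

end FracLaplacian

section NormPower

variable {E : Type*} [NormedAddCommGroup E] [InnerProductSpace ℝ E]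

theorem exists_eq_mul_norm_rpow_of_isometry_invariant {f : E → ℝ} {d : ℝ}
    (hf_smul : ∀ ρ : ℝ, 0 < ρ → ∀ x, f (ρ • x) = ρ ^ d * f x)
    (hf_isometry : ∀ (R : E ≃ₗᵢ[ℝ] E) (x : E), f (R x) = f x) :
    ∃ C : ℝ, ∀ x ≠ 0, f x = C * ‖x‖ ^ d := by
  cases subsingleton_or_nontrivial E with
  | inl _ => exact ⟨0, fun x hx ↦ absurd (Subsingleton.elim x 0) hx⟩
  | inr _ =>
    obtain ⟨e, he⟩ := exists_norm_eq E zero_le_one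
    refine ⟨f e, fun x hx ↦ ?_⟩
    let R := (ℝ ∙ (‖x‖ • e - x))ᗮ.reflection
    have hR : R (‖x‖ • e) = x := Submodule.reflection_sub (by simp [norm_smul, he])
    calc f x = f (R (‖x‖ • e)) := by rw [hR]
      _ = ‖x‖ ^ d * f e := by rw [hf_isometry, hf_smul _ (norm_pos_iff.2 hx)]
      _ = f e * ‖x‖ ^ d := mul_comm _ _

variable [FiniteDimensional ℝ E] [MeasurableSpace E] [BorelSpace E] {s β : ℝ}

theorem frac_laplacian_power_homogeneous_general (hs0 : 0 < s) (hs1 : s < 1)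
    (hβ : -(finrank ℝ E : ℝ) < β) (hβ2s : β < 2 * s) :
    (∀ x : E, x ≠ 0 → Integrable (fracLaplacianIntegrand s (‖·‖ ^ β) x)) ∧
      ∃ C : ℝ, ∀ x : E, x ≠ 0 →
        fracLaplacian s (‖·‖ ^ β) x = C * ‖x‖ ^ (β - 2 * s) := by
  refine ⟨fun x hx ↦ ?_,
    exists_eq_mul_norm_rpow_of_isometry_invariant (fun ρ hρ x ↦ ?_) fun R x ↦ ?_⟩
  · have : Nontrivial E := ⟨x, 0, hx⟩
    exact integrable_fracLaplacianIntegrand hs1 (le_max_right β 0) (max_lt hβ2s (by linarith))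
      (locallyIntegrable_norm_rpow hβ)
      ((contDiffAt_norm ℝ hx).rpow_const_of_ne (norm_ne_zero_iff.2 hx))
      (isBigO_norm_rpow_norm_rpow_cobounded (le_max_left β 0))
  · refine fracLaplacian_smul_of_homogeneous hρ (fun y ↦ ?_) s x
    rw [norm_smul, Real.norm_of_nonneg hρ.le, Real.mul_rpow hρ.le (norm_nonneg y)]
  · simp [← fracLaplacian_comp_linearIsometryEquiv]

end NormPower

/-- **Homogeneity of the fractional Laplacian of a power.**  For `β ∈ (0,2s)` the
symmetric second-difference integral
`J(x) = ∫ (|x+z|^β + |x−z|^β − 2|x|^β) |z|^{−n−2s} dz` converges absolutely for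
every `x ≠ 0`, and `J(x) = C |x|^{β−2s}` for a constant `C` depending only on
`n, s, β`. -/
theorem frac_laplacian_power_homogeneous
    (n : ℕ) (hn : 1 ≤ n) (s β : ℝ)
    (hs0 : 0 < s) (hs1 : s < 1) (hβ0 : 0 < β) (hβ2s : β < 2 * s) :
    (∀ x : EuclideanSpace ℝ (Fin n), x ≠ 0 →
      Integrable (fun z : EuclideanSpace ℝ (Fin n) =>
        (‖x + z‖ ^ β + ‖x - z‖ ^ β - 2 * ‖x‖ ^ β) * ‖z‖ ^ (-(n : ℝ) - 2 * s))) ∧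
    ∃ C : ℝ, ∀ x : EuclideanSpace ℝ (Fin n), x ≠ 0 →
      (∫ z : EuclideanSpace ℝ (Fin n),
        (‖x + z‖ ^ β + ‖x - z‖ ^ β - 2 * ‖x‖ ^ β) * ‖z‖ ^ (-(n : ℝ) - 2 * s))
      = C * ‖x‖ ^ (β - 2 * s) := by
  have hβ : -(finrank ℝ (EuclideanSpace ℝ (Fin n)) : ℝ) < β :=
    (neg_nonpos.2 (Nat.cast_nonneg _)).trans_lt hβ0
  have integrand_eq (x : EuclideanSpace ℝ (Fin n)) : fracLaplacianIntegrand s (‖·‖ ^ β) x =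
      fun z ↦ (‖x + z‖ ^ β + ‖x - z‖ ^ β - 2 * ‖x‖ ^ β) * ‖z‖ ^ (-(n : ℝ) - 2 * s) := by
    ext z
    simp [fracLaplacianIntegrand, secondDifference]
  simpa only [fracLaplacian, integrand_eq] using
    frac_laplacian_power_homogeneous_general hs0 hs1 hβ hβ2s

end
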